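/- arXiv:2007.08829 — 2 statements merged into one kernel-verified Lean document; each statement's English description precedes it below -/
import Mathlib

section
/- Let n ∈ ℕ and let g_1, …, g_n ∈ G. Then for every X ∈ L^1 the inf-convolution of the adjusted Expected Shortfalls satisfies (□_{i=1}^n ES^{g_i})(X) ≥ ES^{g_1+⋯+g_n}(X). -/
open MeasureTheory Set Filter

variable {Ω : Type*} [MeasurableSpace Ω]

/-- An atomless probability space: every set of positive measure has a subset of
strictly smaller positive measure. -/
def Atomless (μ : Measure Ω) : Prop :=
  ∀ A : Set Ω, MeasurableSet A → 0 < μ A →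
    ∃ B : Set Ω, MeasurableSet B ∧ B ⊆ A ∧ 0 < μ B ∧ μ B < μ A

/-- Value at Risk at level `p`: the left `p`-quantile for `p ∈ (0,1]`, the essential
infimum for `p = 0`.  Values are extended reals. -/
noncomputable def VaR (μ : Measure Ω) (X : Ω → ℝ) (p : ℝ) : EReal :=
  if p = 0 then essInf (fun ω => (X ω : EReal)) μ
  else sInf ((fun x : ℝ => (x : EReal)) '' {x : ℝ | ENNReal.ofReal p ≤ μ {ω | X ω ≤ x}})

/-- Real-valued version of the left `p`-quantile, used as the integrand of ES. -/
noncomputable def VaRr (μ : Measure Ω) (X : Ω → ℝ) (p : ℝ) : ℝ :=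
  sInf {x : ℝ | ENNReal.ofReal p ≤ μ {ω | X ω ≤ x}}

/-- Expected Shortfall at level `p`: `(1/(1-p)) ∫_p^1 VaR_q(X) dq` for `p ∈ [0,1)`,
the essential supremum for `p = 1`. -/
noncomputable def ES (μ : Measure Ω) (X : Ω → ℝ) (p : ℝ) : EReal :=
  if p = 1 then essSup (fun ω => (X ω : EReal)) μ
  else (((1 - p)⁻¹ * ∫ q in Set.Ioo p 1, VaRr μ X q : ℝ) : EReal)

/-- The `g`-adjusted Expected Shortfall, `sup_{p ∈ [0,1]} (ES_p(X) - g(p))`.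
Note that in `EReal` one has `⊤ - ⊤ = ⊥`, matching the convention `∞ - ∞ = -∞`. -/
noncomputable def adjES (μ : Measure Ω) (g : ℝ → EReal) (X : Ω → ℝ) : EReal :=
  ⨆ p ∈ Set.Icc (0:ℝ) 1, (ES μ X p - g p)

/-- The class `𝒢` of risk profiles: increasing functions `[0,1] → (-∞,∞]` that are
not identically `∞`. -/
def IsRiskProfile (g : ℝ → EReal) : Prop :=
  MonotoneOn g (Set.Icc (0:ℝ) 1) ∧ (∀ p ∈ Set.Icc (0:ℝ) 1, g p ≠ ⊥) ∧
    ∃ p ∈ Set.Icc (0:ℝ) 1, g p ≠ ⊤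

/-- Second-order stochastic dominance: `SSD μ X Y` means `X ≥_SSD Y`, i.e. every
risk-averse agent prefers `X` to `Y` (positive values are losses). -/
def SSD (μ : Measure Ω) (X Y : Ω → ℝ) : Prop :=
  ∀ u : ℝ → ℝ, Monotone u → ConcaveOn ℝ Set.univ u →
    ∫ ω, u (-(Y ω)) ∂μ ≤ ∫ ω, u (-(X ω)) ∂μ

/-- The inf-convolution of the functionals `ρ_1, …, ρ_n`. -/
noncomputable def infConv (μ : Measure Ω) {n : ℕ} (ρ : Fin n → ((Ω → ℝ) → EReal))
    (X : Ω → ℝ) : EReal :=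
  ⨅ (Y : Fin n → Ω → ℝ) (_ : (∀ i, Integrable (Y i) μ) ∧ ∀ ω, (∑ i, Y i ω) = X ω),
    ∑ i, ρ i (Y i)

/-- The class `𝒢_VaR`: risk profiles finite on `[0,1)`, left-continuous on `[0,1]`
and right-continuous at `0`. -/
def GVaRProfile (g : ℝ → EReal) : Prop :=
  IsRiskProfile g ∧ (∀ p ∈ Set.Ico (0:ℝ) 1, g p ≠ ⊤) ∧
    (∀ p ∈ Set.Ioc (0:ℝ) 1, Filter.Tendsto g (nhdsWithin p (Set.Ico 0 p)) (nhds (g p))) ∧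
    Filter.Tendsto g (nhdsWithin 0 (Set.Ioc 0 1)) (nhds (g 0))

/-- The class `𝒢_ES`: profiles in `𝒢_VaR` such that `h_g(p) = (1-p)g(p)` is concave
on `(0,1)` and left-continuous at `1` (with `h_g(1) = 0` by the convention `0·∞ = 0`). -/
def GESProfile (g : ℝ → EReal) : Prop :=
  GVaRProfile g ∧ ConcaveOn ℝ (Set.Ioo (0:ℝ) 1) (fun p => (1 - p) * (g p).toReal) ∧
    Filter.Tendsto (fun p => (1 - p) * (g p).toReal) (nhdsWithin 1 (Set.Ico (0:ℝ) 1)) (nhds 0)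

lemma qset_eq (μ : Measure Ω) [IsProbabilityMeasure μ] (X : Ω → ℝ) (hX : AEMeasurable X μ)
    (q : ℝ) :
    {x : ℝ | ENNReal.ofReal q ≤ μ {ω | X ω ≤ x}} = {x | q ≤ ProbabilityTheory.cdf (μ.map X) x} := by
  haveI := Measure.isProbabilityMeasure_map hX
  ext x
  have h : μ {ω | X ω ≤ x} = ENNReal.ofReal (ProbabilityTheory.cdf (μ.map X) x) := by
    rw [ProbabilityTheory.ofReal_cdf, Measure.map_apply_of_aemeasurable hX measurableSet_Iic]
    rfl
  simp only [mem_setOf_eq]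
  rw [h, ENNReal.ofReal_le_ofReal_iff (ProbabilityTheory.cdf_nonneg _ _)]

lemma VaRr_le_iff (μ : Measure Ω) [IsProbabilityMeasure μ] (X : Ω → ℝ) (hX : AEMeasurable X μ)
    {q : ℝ} (hq : q ∈ Ioo (0:ℝ) 1) (x : ℝ) :
    VaRr μ X q ≤ x ↔ q ≤ ProbabilityTheory.cdf (μ.map X) x := by
  haveI := Measure.isProbabilityMeasure_map hX
  unfold VaRr
  rw [qset_eq μ X hX]
  set F := ProbabilityTheory.cdf (μ.map X) with hF
  have hne : {x | q ≤ F x}.Nonempty := by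
    have := (ProbabilityTheory.tendsto_cdf_atTop (μ.map X)).eventually (eventually_ge_nhds hq.2)
    exact this.exists
  have hbd : BddBelow {x | q ≤ F x} := by
    have := (ProbabilityTheory.tendsto_cdf_atBot (μ.map X)).eventually (eventually_lt_nhds hq.1)
    obtain ⟨y, hy⟩ := this.exists
    refine ⟨y, fun z hz => ?_⟩
    by_contra hlt
    push Not at hlt
    have := F.mono hlt.le
    simp only [mem_setOf_eq] at hz
    linarith
  constructor
  · intro h
    have hall : ∀ y, x < y → q ≤ F y := by
      intro y hy
      obtain ⟨z, hz, hzy⟩ := exists_lt_of_csInf_lt hne (h.trans_lt hy)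
      exact le_trans hz (F.mono hzy.le)
    have ht : Tendsto F (nhdsWithin x (Ioi x)) (nhds (F x)) :=
      (F.right_continuous x).mono_left (nhdsWithin_mono _ Ioi_subset_Ici_self)
    refine ge_of_tendsto ht ?_
    filter_upwards [self_mem_nhdsWithin] with y hy using hall y hy
  · intro h
    exact csInf_le hbd h

lemma VaRr_mono (μ : Measure Ω) [IsProbabilityMeasure μ] (X : Ω → ℝ) (hX : AEMeasurable X μ) :
    MonotoneOn (VaRr μ X) (Ioo 0 1) := by
  intro a ha b hb hab
  rw [VaRr_le_iff μ X hX ha]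
  exact hab.trans ((VaRr_le_iff μ X hX hb _).1 le_rfl)

lemma VaRr_ident (μ : Measure Ω) [IsProbabilityMeasure μ] (X : Ω → ℝ) (hX : AEMeasurable X μ) :
    ProbabilityTheory.IdentDistrib (VaRr μ X) X (volume.restrict (Ioo (0:ℝ) 1)) μ := by
  haveI := Measure.isProbabilityMeasure_map hX
  have hm : AEMeasurable (VaRr μ X) (volume.restrict (Ioo (0:ℝ) 1)) :=
    aemeasurable_restrict_of_monotoneOn measurableSet_Ioo (VaRr_mono μ X hX)
  refine ⟨hm, hX, ?_⟩
  refine Measure.ext_of_Iic _ _ fun a => ?_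
  rw [← ProbabilityTheory.ofReal_cdf (μ.map X), Measure.map_apply_of_aemeasurable hm measurableSet_Iic]
  set F := ProbabilityTheory.cdf (μ.map X) with hF
  have h0 : 0 ≤ F a := ProbabilityTheory.cdf_nonneg _ _
  have h1 : F a ≤ 1 := ProbabilityTheory.cdf_le_one _ _
  rw [Measure.restrict_apply' measurableSet_Ioo]
  have hs : VaRr μ X ⁻¹' Iic a ∩ Ioo 0 1 = Iic (F a) ∩ Ioo 0 1 := by
    ext q
    simp only [mem_inter_iff, mem_preimage, mem_Iic]
    constructor
    · rintro ⟨h, hq⟩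
      exact ⟨(VaRr_le_iff μ X hX hq a).1 h, hq⟩
    · rintro ⟨h, hq⟩
      exact ⟨(VaRr_le_iff μ X hX hq a).2 h, hq⟩
  rw [hs]
  apply le_antisymm
  · calc volume (Iic (F a) ∩ Ioo 0 1) ≤ volume (Ioc 0 (F a)) :=
        measure_mono (fun q hq => (⟨hq.2.1, hq.1⟩ : q ∈ Ioc 0 (F a)))
      _ = _ := by rw [Real.volume_Ioc, sub_zero]
  · calc ENNReal.ofReal (F a) = volume (Ioo 0 (F a)) := by rw [Real.volume_Ioo, sub_zero]
      _ ≤ _ := measure_mono (fun q hq => (⟨hq.2.le, hq.1, hq.2.trans_le h1⟩ : q ∈ Iic (F a) ∩ Ioo 0 1))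

lemma VaRr_integrable (μ : Measure Ω) [IsProbabilityMeasure μ] (X : Ω → ℝ) (hX : Integrable X μ) :
    IntegrableOn (VaRr μ X) (Ioo (0:ℝ) 1) :=
  (VaRr_ident μ X hX.aemeasurable).integrable_iff.2 hX

lemma pos_ident (μ : Measure Ω) [IsProbabilityMeasure μ] (X : Ω → ℝ) (hX : Integrable X μ) (x : ℝ) :
    ∫ q in Ioo (0:ℝ) 1, max (VaRr μ X q - x) 0 = ∫ ω, max (X ω - x) 0 ∂μ :=
  ((VaRr_ident μ X hX.aemeasurable).comp
    (u := fun y : ℝ => max (y - x) 0) (by fun_prop)).integral_eq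

lemma tail_le (μ : Measure Ω) [IsProbabilityMeasure μ] (X : Ω → ℝ) (hX : Integrable X μ)
    {p : ℝ} (hp : p ∈ Ioo (0:ℝ) 1) (x : ℝ) :
    ∫ q in Ioo p 1, VaRr μ X q ≤ (1 - p) * x + ∫ ω, max (X ω - x) 0 ∂μ := by
  have hsub : Ioo p 1 ⊆ Ioo (0:ℝ) 1 := Ioo_subset_Ioo_left hp.1.le
  have hi := VaRr_integrable μ X hX
  have hI : IntegrableOn (fun q => max (VaRr μ X q - x) 0) (Ioo (0:ℝ) 1) :=
    (hi.sub (integrable_const x)).pos_part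
  rw [← pos_ident μ X hX x]
  calc ∫ q in Ioo p 1, VaRr μ X q ≤ ∫ q in Ioo p 1, (x + max (VaRr μ X q - x) 0) := by
        refine integral_mono (hi.mono_set hsub) ((integrable_const x).add (hI.mono_set hsub)) ?_
        intro q
        have := le_max_left (VaRr μ X q - x) 0
        simp only
        linarith
    _ = (1 - p) * x + ∫ q in Ioo p 1, max (VaRr μ X q - x) 0 := by
        rw [integral_add (integrable_const x) (hI.mono_set hsub)]
        simp [hp.2.le]
    _ ≤ _ := by
        refine add_le_add le_rfl ?_
        exact setIntegral_mono_set hI (ae_of_all _ fun q => le_max_right _ _)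
          (HasSubset.Subset.eventuallyLE hsub)

lemma tail_eq (μ : Measure Ω) [IsProbabilityMeasure μ] (X : Ω → ℝ) (hX : Integrable X μ)
    {p : ℝ} (hp : p ∈ Ioo (0:ℝ) 1) :
    ∫ q in Ioo p 1, VaRr μ X q =
      (1 - p) * VaRr μ X p + ∫ ω, max (X ω - VaRr μ X p) 0 ∂μ := by
  have hsub : Ioo p 1 ⊆ Ioo (0:ℝ) 1 := Ioo_subset_Ioo_left hp.1.le
  have hi := VaRr_integrable μ X hX
  have hm := VaRr_mono μ X hX.aemeasurable
  rw [← pos_ident μ X hX]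
  have h1 : ∫ q in Ioo (0:ℝ) 1, max (VaRr μ X q - VaRr μ X p) 0
      = ∫ q in Ioo p 1, max (VaRr μ X q - VaRr μ X p) 0 := by
    refine setIntegral_eq_of_subset_of_forall_diff_eq_zero measurableSet_Ioo hsub ?_
    rintro q ⟨hq, hq2⟩
    have : q ≤ p := by
      by_contra h
      exact hq2 ⟨not_le.1 h, hq.2⟩
    exact max_eq_right (sub_nonpos.2 (hm hq hp this))
  have h2 : ∫ q in Ioo p 1, max (VaRr μ X q - VaRr μ X p) 0
      = ∫ q in Ioo p 1, (VaRr μ X q - VaRr μ X p) := by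
    refine setIntegral_congr_fun measurableSet_Ioo fun q hq => ?_
    exact max_eq_left (sub_nonneg.2 (hm hp (hsub hq) hq.1.le))
  rw [h1, h2, integral_sub (hi.mono_set hsub) (integrable_const _)]
  simp [hp.2.le]

lemma tail_subadd (μ : Measure Ω) [IsProbabilityMeasure μ] {n : ℕ} (X : Ω → ℝ)
    (hX : Integrable X μ) (Y : Fin n → Ω → ℝ) (hY : ∀ i, Integrable (Y i) μ)
    (hs : ∀ ω, (∑ i, Y i ω) = X ω) {p : ℝ} (hp : p ∈ Ico (0:ℝ) 1) :
    ∫ q in Ioo p 1, VaRr μ X q ≤ ∑ i, ∫ q in Ioo p 1, VaRr μ (Y i) q := by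
  rcases hp.1.eq_or_lt with h0 | h0
  · subst h0
    have h : ∀ Z : Ω → ℝ, Integrable Z μ → ∫ q in Ioo (0:ℝ) 1, VaRr μ Z q = ∫ ω, Z ω ∂μ :=
      fun Z hZ => (VaRr_ident μ Z hZ.aemeasurable).integral_eq
    rw [h X hX, Finset.sum_congr rfl fun i _ => h (Y i) (hY i),
      ← integral_finsetSum _ fun i _ => hY i]
    simp [hs]
  · have hp' : p ∈ Ioo (0:ℝ) 1 := ⟨h0, hp.2⟩
    rw [Finset.sum_congr rfl fun i _ => tail_eq μ (Y i) (hY i) hp']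
    refine (tail_le μ X hX hp' (∑ i, VaRr μ (Y i) p)).trans ?_
    have hI : ∀ i, Integrable (fun ω => max (Y i ω - VaRr μ (Y i) p) 0) μ := fun i =>
      ((hY i).sub (integrable_const _)).pos_part
    rw [Finset.sum_add_distrib, ← Finset.mul_sum, ← integral_finsetSum _ fun i _ => hI i]
    gcongr
    · exact (hX.sub (integrable_const _)).pos_part
    · exact integrable_finsetSum _ fun i _ => hI i
    · intro ω
      simp only
      refine max_le ?_ (Finset.sum_nonneg fun i _ => le_max_right _ _)
      rw [← hs ω, ← Finset.sum_sub_distrib]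
      exact Finset.sum_le_sum fun i _ => le_max_left _ _

lemma coe_sum_EReal {ι : Type*} (s : Finset ι) (f : ι → ℝ) :
    ((∑ i ∈ s, f i : ℝ) : EReal) = ∑ i ∈ s, (f i : EReal) := by
  classical
  induction s using Finset.induction_on with
  | empty => simp
  | insert a s ha ih => rw [Finset.sum_insert ha, Finset.sum_insert ha, EReal.coe_add, ih]

lemma ES_subadd (μ : Measure Ω) [IsProbabilityMeasure μ] {n : ℕ} (X : Ω → ℝ)
    (hX : Integrable X μ) (Y : Fin n → Ω → ℝ) (hY : ∀ i, Integrable (Y i) μ)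
    (hs : ∀ ω, (∑ i, Y i ω) = X ω) {p : ℝ} (hp : p ∈ Icc (0:ℝ) 1) :
    ES μ X p ≤ ∑ i, ES μ (Y i) p := by
  unfold ES
  split_ifs with h
  · have hall : ∀ᵐ ω ∂μ, ∀ i, (Y i ω : EReal) ≤ essSup (fun ω => (Y i ω : EReal)) μ :=
      ae_all_iff.2 fun i => ae_le_essSup
    refine essSup_le_of_ae_le _ ?_
    filter_upwards [hall] with ω hω
    rw [← hs ω, coe_sum_EReal]
    exact Finset.sum_le_sum fun i _ => hω i
  · rw [← coe_sum_EReal, EReal.coe_le_coe_iff, ← Finset.mul_sum]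
    have hp1 : p < 1 := lt_of_le_of_ne hp.2 h
    have : 0 ≤ (1 - p)⁻¹ := inv_nonneg.2 (by linarith)
    exact mul_le_mul_of_nonneg_left (tail_subadd μ X hX Y hY hs ⟨hp.1, hp1⟩) this

lemma ES_ne_bot (μ : Measure Ω) [IsProbabilityMeasure μ] (X : Ω → ℝ) (p : ℝ) :
    ES μ X p ≠ ⊥ := by
  unfold ES
  split_ifs with h
  · intro hb
    have : ∀ᵐ ω ∂μ, (X ω : EReal) ≤ essSup (fun ω => (X ω : EReal)) μ := ae_le_essSup
    obtain ⟨ω, hω⟩ := this.exists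
    rw [hb] at hω
    exact EReal.coe_ne_bot _ (le_bot_iff.1 hω)
  · exact EReal.coe_ne_bot _

lemma sum_ne_bot {ι : Type*} (s : Finset ι) (f : ι → EReal) (h : ∀ i ∈ s, f i ≠ ⊥) :
    ∑ i ∈ s, f i ≠ ⊥ := by
  classical
  induction s using Finset.induction_on with
  | empty => simp
  | insert a s ha ih =>
    rw [Finset.sum_insert ha]
    intro hb
    rcases EReal.add_eq_bot_iff.1 hb with h1 | h1
    · exact h a (Finset.mem_insert_self _ _) h1
    · exact ih (fun i hi => h i (Finset.mem_insert_of_mem hi)) h1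

/-- For risk profiles `g_1, …, g_n ∈ 𝒢`, the inf-convolution of the
adjusted Expected Shortfalls dominates the adjusted Expected Shortfall of the sum:
`(□_{i=1}^n ES^{g_i})(X) ≥ ES^{g_1+⋯+g_n}(X)`. -/
theorem stmt6 (μ : Measure Ω) [IsProbabilityMeasure μ] (hatomless : Atomless μ)
    (n : ℕ) (hn : 0 < n) (g : Fin n → ℝ → EReal) (hg : ∀ i, IsRiskProfile (g i))
    (X : Ω → ℝ) (hX : Integrable X μ) :
    adjES μ (fun p => ∑ i, g i p) X ≤ infConv μ (fun i => adjES μ (g i)) X := by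
  unfold infConv
  refine le_iInf₂ fun Y hY => ?_
  obtain ⟨hY, hs⟩ := hY
  refine iSup₂_le fun p hp => ?_
  by_cases htop : ∃ i, g i p = ⊤
  · obtain ⟨i, hi⟩ := htop
    have : ∑ i, g i p = ⊤ := by
      classical
      rw [← Finset.add_sum_erase _ _ (Finset.mem_univ i), hi]
      exact EReal.top_add_of_ne_bot (sum_ne_bot _ _ fun j _ => (hg j).2.1 p hp)
    simp only [this, EReal.sub_top]
    exact bot_le
  · push Not at htop
    refine le_trans ?_ (Finset.sum_le_sum fun i _ =>
      le_iSup₂ (f := fun p (_ : p ∈ Set.Icc (0:ℝ) 1) => ES μ (Y i) p - g i p) p hp)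
    have hb : ∀ i, g i p = (((g i p).toReal : ℝ) : EReal) := fun i =>
      (EReal.coe_toReal (htop i) ((hg i).2.1 p hp)).symm
    generalize hbb : (fun i => (g i p).toReal) = b at hb
    have hb' : ∀ i, g i p = (b i : EReal) := fun i => by rw [hb i, ← hbb]
    simp only [hb', sub_eq_add_neg, ← EReal.coe_neg, ← coe_sum_EReal]
    rw [Finset.sum_add_distrib, ← coe_sum_EReal, Finset.sum_neg_distrib]
    gcongr
    exact ES_subadd μ X hX Y hY hs hp
end

section
/- Let g ∈ G. For every X ∈ L^1, ES^g(X) = sup_{Q ∈ P^∞_P} { E_Q[X] − g(1 − ‖dQ/dP‖_∞^{−1}) }, where P^∞_P denotes the set of probability measures Q on the underlying measurable space that are absolutely continuous with respect to P and whose Radon–Nikodym density dQ/dP is essentially bounded. -/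
open MeasureTheory Set Filter

variable {Ω : Type*} [MeasurableSpace Ω]

lemma aux_galois (μ : Measure Ω) [IsProbabilityMeasure μ] (X : Ω → ℝ) (hX : Measurable X)
    (q : ℝ) (h0 : 0 < q) (h1 : q < 1) (x : ℝ) :
    VaRr μ X q ≤ x ↔ q ≤ μ.real {ω | X ω ≤ x} := by
  haveI : IsProbabilityMeasure (μ.map X) := Measure.isProbabilityMeasure_map hX.aemeasurable
  have hF : ∀ y, ProbabilityTheory.cdf (μ.map X) y = μ.real {ω | X ω ≤ y} := by
    intro y
    rw [ProbabilityTheory.cdf_eq_real, measureReal_def, Measure.map_apply hX measurableSet_Iic]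
    rfl
  have hS : {x : ℝ | ENNReal.ofReal q ≤ μ {ω | X ω ≤ x}}
      = {x : ℝ | q ≤ ProbabilityTheory.cdf (μ.map X) x} := by
    ext y
    simp only [mem_ofPred_eq, hF, measureReal_def]
    exact ENNReal.ofReal_le_iff_le_toReal (measure_ne_top _ _)
  rw [← hF]
  unfold VaRr
  rw [hS]
  have hbdd : BddBelow {x : ℝ | q ≤ ProbabilityTheory.cdf (μ.map X) x} := by
    obtain ⟨b, hb⟩ := ((ProbabilityTheory.tendsto_cdf_atBot (μ.map X)).eventually_lt_const h0).exists
    refine ⟨b, fun y hy => ?_⟩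
    by_contra! hlt
    have := ProbabilityTheory.monotone_cdf (μ.map X) hlt.le
    simp only [mem_ofPred_eq] at hy
    linarith
  have hne : {x : ℝ | q ≤ ProbabilityTheory.cdf (μ.map X) x}.Nonempty := by
    obtain ⟨b, hb⟩ := ((ProbabilityTheory.tendsto_cdf_atTop (μ.map X)).eventually_const_lt h1).exists
    exact ⟨b, hb.le⟩
  constructor
  · intro h
    have hy : ∀ y, x < y → q ≤ ProbabilityTheory.cdf (μ.map X) y := by
      intro y hxy
      obtain ⟨z, hz, hzy⟩ := exists_lt_of_csInf_lt hne (h.trans_lt hxy)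
      exact le_trans hz (ProbabilityTheory.monotone_cdf (μ.map X) hzy.le)
    have hc := (ProbabilityTheory.cdf (μ.map X)).right_continuous x
    have hc' : Tendsto (ProbabilityTheory.cdf (μ.map X)) (nhdsWithin x (Ioi x))
      (nhds (ProbabilityTheory.cdf (μ.map X) x)) := hc.tendsto.mono_left (nhdsWithin_mono _ Ioi_subset_Ici_self)
    exact ge_of_tendsto hc' (eventually_nhdsWithin_of_forall hy)
  · intro h
    exact csInf_le hbdd h

lemma aux_mono (μ : Measure Ω) [IsProbabilityMeasure μ] (X : Ω → ℝ) (hX : Measurable X) :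
    MonotoneOn (VaRr μ X) (Ioo 0 1) := by
  intro a ha b hb hab
  rw [aux_galois μ X hX a ha.1 ha.2]
  exact hab.trans ((aux_galois μ X hX b hb.1 hb.2 _).1 le_rfl)

lemma aux_aem (μ : Measure Ω) [IsProbabilityMeasure μ] (X : Ω → ℝ) (hX : Measurable X) :
    AEMeasurable (VaRr μ X) (volume.restrict (Ioo 0 1)) :=
  aemeasurable_restrict_of_monotoneOn measurableSet_Ioo (aux_mono μ X hX)

lemma aux_map (μ : Measure Ω) [IsProbabilityMeasure μ] (X : Ω → ℝ) (hX : Measurable X) :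
    (volume.restrict (Ioo (0:ℝ) 1)).map (VaRr μ X) = μ.map X := by
  haveI : IsProbabilityMeasure (μ.map X) := Measure.isProbabilityMeasure_map hX.aemeasurable
  apply Measure.ext_of_Iic
  intro x
  rw [Measure.map_apply_of_aemeasurable (aux_aem μ X hX) measurableSet_Iic,
    Measure.map_apply hX measurableSet_Iic, Measure.restrict_apply' measurableSet_Ioo]
  have e : μ (X ⁻¹' Iic x) = ENNReal.ofReal (μ.real {ω | X ω ≤ x}) := by
    rw [ofReal_measureReal]; rfl
  rw [e]
  have hle : μ.real {ω | X ω ≤ x} ≤ 1 := measureReal_le_one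
  apply le_antisymm
  · calc _ ≤ volume (Ioc 0 (μ.real {ω | X ω ≤ x})) := by
          apply measure_mono
          rintro q ⟨hq, h0, h1⟩
          exact ⟨h0, (aux_galois μ X hX q h0 h1 x).1 hq⟩
      _ = _ := by simp
  · calc _ = volume (Ioo 0 (μ.real {ω | X ω ≤ x})) := by simp
      _ ≤ _ := by
          apply measure_mono
          rintro q ⟨h0, h1⟩
          exact ⟨(aux_galois μ X hX q h0 (h1.trans_le hle) x).2 h1.le, h0, h1.trans_le hle⟩

lemma aux_integral (μ : Measure Ω) [IsProbabilityMeasure μ] (X : Ω → ℝ) (hX : Measurable X)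
    (f : ℝ → ℝ) (hf : Continuous f) :
    ∫ q in Ioo (0:ℝ) 1, f (VaRr μ X q) = ∫ ω, f (X ω) ∂μ := by
  rw [← integral_map (aux_aem μ X hX) hf.aestronglyMeasurable,
    ← integral_map hX.aemeasurable hf.aestronglyMeasurable, aux_map μ X hX]

lemma aux_integrable (μ : Measure Ω) [IsProbabilityMeasure μ] (X : Ω → ℝ) (hX : Measurable X)
    (hi : Integrable X μ) : IntegrableOn (VaRr μ X) (Ioo (0:ℝ) 1) := by
  have h : Integrable (fun x : ℝ => x) (μ.map X) := by
    rw [integrable_map_measure (by fun_prop) hX.aemeasurable]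
    exact hi
  rw [← aux_map μ X hX, integrable_map_measure (by fun_prop) (aux_aem μ X hX)] at h
  exact h

lemma aux_ES (μ : Measure Ω) [IsProbabilityMeasure μ] (X : Ω → ℝ) (hX : Measurable X)
    (hi : Integrable X μ) (p : ℝ) (h0 : 0 < p) (h1 : p < 1) :
    ∫ q in Ioo p 1, VaRr μ X q
      = (1 - p) * VaRr μ X p + ∫ ω, max (X ω - VaRr μ X p) 0 ∂μ := by
  set t := VaRr μ X p with ht
  have hI := aux_integrable μ X hX hi
  have hsub : Ioo p 1 ⊆ Ioo (0:ℝ) 1 := fun q hq => ⟨h0.trans hq.1, hq.2⟩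
  have hIp := hI.mono_set hsub
  have hc : IntegrableOn (fun _ : ℝ => t) (Ioo p 1) := by simp [integrableOn_const_iff]
  rw [← aux_integral μ X hX (fun x => max (x - t) 0) (by fun_prop)]
  have e : ∫ q in Ioo (0:ℝ) 1, max (VaRr μ X q - t) 0 = ∫ q in Ioo p 1, (VaRr μ X q - t) := by
    rw [setIntegral_eq_of_subset_of_forall_sdiff_eq_zero measurableSet_Ioo hsub]
    · apply setIntegral_congr_fun measurableSet_Ioo
      intro q hq
      have := aux_mono μ X hX ⟨h0, h1⟩ (hsub hq) hq.1.le
      simp only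
      rw [max_eq_left (by linarith)]
    · rintro q ⟨hq, hq'⟩
      have hqp : q ≤ p := by
        by_contra! h
        exact hq' ⟨h, hq.2⟩
      have := aux_mono μ X hX hq ⟨h0, h1⟩ hqp
      exact max_eq_right (by linarith)
  rw [e, integral_sub hIp hc]
  simp [h1.le]

lemma aux_ES0 (μ : Measure Ω) [IsProbabilityMeasure μ] (X : Ω → ℝ) (hX : Measurable X) :
    ∫ q in Ioo (0:ℝ) 1, VaRr μ X q = ∫ ω, X ω ∂μ :=
  aux_integral μ X hX (fun x => x) continuous_id

lemma aux_upper (μ : Measure Ω) [IsProbabilityMeasure μ] (X : Ω → ℝ) (hX : Measurable X)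
    (hi : Integrable X μ) (Q : Measure Ω) [IsProbabilityMeasure Q] (hQ : Q ≪ μ)
    (hfin : essSup (Q.rnDeriv μ) μ < ⊤) :
    1 ≤ (essSup (Q.rnDeriv μ) μ).toReal ∧
    ((∫ ω, X ω ∂Q : ℝ) : EReal) ≤ ES μ X (1 - ((essSup (Q.rnDeriv μ) μ).toReal)⁻¹) := by
  set C := essSup (Q.rnDeriv μ) μ with hC
  have hae : ∀ᵐ ω ∂μ, Q.rnDeriv μ ω ≤ C := ENNReal.ae_le_essSup _
  have hle : Q ≤ C • μ := by
    rw [← Measure.withDensity_rnDeriv_eq Q μ hQ, ← withDensity_const]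
    exact withDensity_mono hae
  have h1C : 1 ≤ C := by
    have := hle univ
    simpa using this
  have hc1 : 1 ≤ C.toReal := by
    rw [← ENNReal.toReal_one]
    exact ENNReal.toReal_mono hfin.ne h1C
  refine ⟨hc1, ?_⟩
  set c := C.toReal with hc
  have hc0 : 0 < c := by linarith
  have hCc : C = ENNReal.ofReal c := (ENNReal.ofReal_toReal hfin.ne).symm
  have hinv : 0 < c⁻¹ := by positivity
  have hiC : ∀ f : Ω → ℝ, Integrable f μ → Integrable f (C • μ) := fun f hf =>
    hf.smul_measure hfin.ne
  have hiQ : ∀ f : Ω → ℝ, Integrable f μ → Integrable f Q := fun f hf =>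
    (hiC f hf).mono_measure hle
  unfold ES
  rw [if_neg (by linarith)]
  rw [EReal.coe_le_coe_iff]
  rcases hc1.eq_or_lt with h | h
  · have hC1 : C = 1 := by rw [hCc, ← h]; simp
    have hQμ : Q = μ := by
      rw [hC1, one_smul] at hle
      exact Measure.eq_of_le_of_measure_univ_eq hle (by simp)
    rw [← h, hQμ]
    simp [aux_ES0 μ X hX]
  · have hp0 : 0 < 1 - c⁻¹ := by
      have := inv_lt_one_of_one_lt₀ h
      linarith
    rw [aux_ES μ X hX hi _ hp0 (by linarith)]
    set t := VaRr μ X (1 - c⁻¹)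
    have hm : Integrable (fun ω => max (X ω - t) 0) μ := (hi.sub (integrable_const t)).pos_part
    have s1 : ∫ ω, X ω ∂Q ≤ ∫ ω, (t + max (X ω - t) 0) ∂Q := by
      apply integral_mono (hiQ X hi) ((integrable_const t).add (hiQ _ hm))
      intro ω
      have := le_max_left (X ω - t) 0
      change X ω ≤ t + max (X ω - t) 0
      linarith
    rw [integral_add (integrable_const t) (hiQ _ hm)] at s1
    have s2 : ∫ ω, max (X ω - t) 0 ∂Q ≤ ∫ ω, max (X ω - t) 0 ∂(C • μ) :=
      integral_mono_measure hle (Eventually.of_forall fun ω => le_max_right _ _) (hiC _ hm)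
    rw [integral_smul_measure] at s2
    simp at s1
    simp only [smul_eq_mul] at s2
    change _ ≤ c * _ at s2
    have : (1 - (1 - c⁻¹))⁻¹ = c := by simp
    rw [this, mul_add, sub_sub_cancel, ← mul_assoc, mul_inv_cancel₀ hc0.ne']
    linarith

lemma aux_lower (μ : Measure Ω) [IsProbabilityMeasure μ] (X : Ω → ℝ)
    (hi : Integrable X μ) (g : ℝ → EReal) (hg : MonotoneOn g (Icc 0 1)) (p : ℝ)
    (h0 : 0 ≤ p) (h1 : p < 1) (Z : Ω → ℝ) (hZ : Measurable Z) (hZ0 : ∀ ω, 0 ≤ Z ω)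
    (hZ1 : ∀ ω, Z ω ≤ (1 - p)⁻¹) (hZi : ∫ ω, Z ω ∂μ = 1) :
    ((∫ ω, Z ω * X ω ∂μ : ℝ) : EReal) - g p ≤ 
      ⨆ Q ∈ {Q : Measure Ω | IsProbabilityMeasure Q ∧ Q ≪ μ ∧
            essSup (Q.rnDeriv μ) μ < ⊤},
          (((∫ ω, X ω ∂Q : ℝ) : EReal) - g (1 - ((essSup (Q.rnDeriv μ) μ).toReal)⁻¹)) := by
  have hpp : 0 < 1 - p := by linarith
  set Q := μ.withDensity (fun ω => ENNReal.ofReal (Z ω)) with hQdef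
  have hZm : Measurable (fun ω => ENNReal.ofReal (Z ω)) := hZ.ennreal_ofReal
  have hZint : Integrable Z μ := by
    by_contra h
    rw [integral_undef h] at hZi
    norm_num at hZi
  have hQp : IsProbabilityMeasure Q := by
    constructor
    rw [hQdef, withDensity_apply _ MeasurableSet.univ, Measure.restrict_univ,
      ← ofReal_integral_eq_lintegral_ofReal hZint (Eventually.of_forall hZ0), hZi]
    simp
  have hac : Q ≪ μ := withDensity_absolutelyContinuous _ _
  have hrn : Q.rnDeriv μ =ᵐ[μ] fun ω => ENNReal.ofReal (Z ω) := Measure.rnDeriv_withDensity μ hZm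
  have hes : essSup (Q.rnDeriv μ) μ ≤ ENNReal.ofReal (1 - p)⁻¹ := by
    refine essSup_le_of_ae_le _ ?_
    filter_upwards [hrn] with ω hω
    rw [hω]
    exact ENNReal.ofReal_le_ofReal (hZ1 ω)
  have hfin : essSup (Q.rnDeriv μ) μ < ⊤ := hes.trans_lt ENNReal.ofReal_lt_top
  have hc1 : 1 ≤ (essSup (Q.rnDeriv μ) μ).toReal :=
    (aux_upper μ (fun _ => 0) measurable_const (integrable_const 0) Q hac hfin).1
  have hc2 : (essSup (Q.rnDeriv μ) μ).toReal ≤ (1 - p)⁻¹ :=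
    ENNReal.toReal_le_of_le_ofReal (by positivity) hes
  have hint : ∫ ω, X ω ∂Q = ∫ ω, Z ω * X ω ∂μ := by
    rw [hQdef, integral_withDensity_eq_integral_toReal_smul hZm
      (Eventually.of_forall fun _ => ENNReal.ofReal_lt_top)]
    simp [ENNReal.toReal_ofReal (hZ0 _)]
  refine le_trans ?_ (le_iSup₂ (f := fun (Q : Measure Ω) (_ : Q ∈ {Q : Measure Ω | IsProbabilityMeasure Q ∧ Q ≪ μ ∧
            essSup (Q.rnDeriv μ) μ < ⊤}) => (((∫ ω, X ω ∂Q : ℝ) : EReal) - g (1 - ((essSup (Q.rnDeriv μ) μ).toReal)⁻¹))) Q ⟨hQp, hac, hfin⟩)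
  rw [hint]
  apply EReal.sub_le_sub le_rfl
  set c := (essSup (Q.rnDeriv μ) μ).toReal
  have a1 : c⁻¹ ≤ 1 := inv_le_one_of_one_le₀ hc1
  have a2 : 0 < c⁻¹ := by positivity
  have a3 : 1 - p ≤ c⁻¹ := by
    rw [← inv_inv (1 - p)]
    exact inv_anti₀ (by linarith) hc2
  exact hg ⟨by linarith, by linarith⟩ ⟨h0, h1.le⟩ (by linarith)

lemma aux_exZ (μ : Measure Ω) [IsProbabilityMeasure μ] (X : Ω → ℝ) (hX : Measurable X)
    (hi : Integrable X μ) (p : ℝ) (h0 : 0 ≤ p) (h1 : p < 1) :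
    ∃ Z : Ω → ℝ, Measurable Z ∧ (∀ ω, 0 ≤ Z ω) ∧ (∀ ω, Z ω ≤ (1 - p)⁻¹) ∧
      ∫ ω, Z ω ∂μ = 1 ∧ (1 - p)⁻¹ * ∫ q in Ioo p 1, VaRr μ X q = ∫ ω, Z ω * X ω ∂μ := by
  rcases h0.eq_or_lt with h | h
  · subst h
    exact ⟨fun _ => 1, measurable_const, by simp, by simp, by simp, by simp [aux_ES0 μ X hX]⟩
  rw [aux_ES μ X hX hi p h h1]
  have hpp : 0 < 1 - p := by linarith
  set t := VaRr μ X p with ht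
  set A := {ω | t < X ω} with hA
  set B := {ω | X ω = t} with hB
  have mA : MeasurableSet A := measurableSet_lt measurable_const hX
  have mB : MeasurableSet B := measurableSet_eq_fun hX measurable_const
  have hFt : p ≤ μ.real {ω | X ω ≤ t} := (aux_galois μ X hX p h h1 t).1 le_rfl
  have hAc : μ.real A = 1 - μ.real {ω | X ω ≤ t} := by
    rw [← probReal_compl_eq_one_sub (measurableSet_le hX measurable_const)]
    congr 1
    ext ω
    simp [hA]
  have hlt : μ.real {ω | X ω < t} ≤ p := by
    have hu : {ω | X ω < t} = ⋃ n : ℕ, {ω | X ω ≤ t - 1 / ((n:ℝ) + 1)} := by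
      ext ω
      simp only [mem_ofPred_eq, mem_iUnion]
      constructor
      · intro hω
        obtain ⟨n, hn⟩ := exists_nat_one_div_lt (sub_pos.2 hω)
        exact ⟨n, by linarith⟩
      · rintro ⟨n, hn⟩
        have : (0:ℝ) < 1 / ((n:ℝ) + 1) := by positivity
        linarith
    have hmono : Monotone fun n : ℕ => {ω | X ω ≤ t - 1 / ((n:ℝ) + 1)} := by
      intro m n hmn ω hω
      simp only [mem_ofPred_eq] at hω ⊢
      have : 1 / ((n:ℝ) + 1) ≤ 1 / ((m:ℝ) + 1) := by
        apply one_div_le_one_div_of_le (by positivity)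
        have : (m:ℝ) ≤ n := by exact_mod_cast hmn
        linarith
      linarith
    have hT := tendsto_measure_iUnion_atTop (μ := μ) hmono
    rw [← hu] at hT
    have hT' := (ENNReal.tendsto_toReal (measure_ne_top μ _)).comp hT
    refine le_of_tendsto hT' (Eventually.of_forall fun n => ?_)
    change μ.real {ω | X ω ≤ t - 1 / ((n:ℝ) + 1)} ≤ p
    by_contra! hh
    have := (aux_galois μ X hX p h h1 _).2 hh.le
    have h3 : (0:ℝ) < 1 / ((n:ℝ) + 1) := by positivity
    rw [← ht] at this
    linarith
  have hBs : μ.real {ω | X ω ≤ t} = μ.real {ω | X ω < t} + μ.real B := by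
    rw [← measureReal_union _ mB]
    · congr 1
      ext ω
      simp [hB, le_iff_lt_or_eq]
    · rw [Set.disjoint_left]
      intro ω h1 h2
      simp only [hB, mem_ofPred_eq] at h1 h2
      linarith
  obtain ⟨θ, hθ0, hθ1, hθ⟩ : ∃ θ : ℝ, 0 ≤ θ ∧ θ ≤ 1 ∧ μ.real A + θ * μ.real B = 1 - p := by
    rcases (measureReal_nonneg (μ := μ) (s := B)).eq_or_lt with hb | hb
    · exact ⟨0, le_rfl, zero_le_one, by linarith⟩
    · refine ⟨(1 - p - μ.real A) / μ.real B, div_nonneg (by linarith) hb.le, ?_, ?_⟩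
      · rw [div_le_one hb]; linarith
      · rw [div_mul_cancel₀ _ hb.ne']; ring
  have hI : ∀ (S : Set Ω), MeasurableSet S → Integrable (S.indicator (fun _ => (1:ℝ))) μ :=
    fun S hS => (integrable_const 1).indicator hS
  set Z : Ω → ℝ := fun ω => (1 - p)⁻¹ * (A.indicator (fun _ => (1:ℝ)) ω + θ * B.indicator (fun _ => (1:ℝ)) ω) with hZ
  have hZi : ∫ ω, Z ω ∂μ = 1 := by
    rw [hZ, integral_const_mul, integral_add (hI A mA) ((hI B mB).const_mul θ), integral_const_mul,
      integral_indicator_const _ mA, integral_indicator_const _ mB]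
    simp only [smul_eq_mul, mul_one]
    rw [hθ, inv_mul_cancel₀ hpp.ne']
  have hZint : Integrable Z μ := ((hI A mA).add ((hI B mB).const_mul θ)).const_mul _
  have hm : Integrable (fun ω => max (X ω - t) 0) μ := (hi.sub (integrable_const t)).pos_part
  have hb : ∀ ω, 0 ≤ (A.indicator (fun _ => (1:ℝ)) ω + θ * B.indicator (fun _ => (1:ℝ)) ω) ∧
      (A.indicator (fun _ => (1:ℝ)) ω + θ * B.indicator (fun _ => (1:ℝ)) ω) ≤ 1 ∧ 
      Z ω * X ω = t * Z ω + (1 - p)⁻¹ * max (X ω - t) 0 := by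
    intro ω
    simp only [hZ]
    rcases lt_trichotomy (X ω) t with hx | hx | hx
    · have e1 : ω ∉ A := by simp [hA, hx.le]
      have e2 : ω ∉ B := by simp [hB, hx.ne]
      have e3 : max (X ω - t) 0 = 0 := max_eq_right (by linarith)
      simp [e1, e2, e3]
    · have e1 : ω ∉ A := by simp [hA, hx.le]
      have e2 : ω ∈ B := by simp [hB, hx]
      simp [e1, e2, hx, hθ0, hθ1, mul_comm]
    · have e1 : ω ∈ A := by simp [hA, hx]
      have e2 : ω ∉ B := by simp [hB, hx.ne']
      have e3 : max (X ω - t) 0 = X ω - t := max_eq_left (by linarith)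
      simp only [e1, e2, e3, indicator_of_mem, indicator_of_notMem, not_false_eq_true]
      refine ⟨by norm_num, by norm_num, by ring⟩
  refine ⟨Z, ?_, fun ω => mul_nonneg (by positivity) (hb ω).1, fun ω => ?_, hZi, ?_⟩
  · exact ((measurable_const.indicator mA).add ((measurable_const.indicator mB).const_mul θ)).const_mul _
  · exact mul_le_of_le_one_right (by positivity) (hb ω).2.1
  · rw [integral_congr_ae (Eventually.of_forall fun ω => (hb ω).2.2),
      integral_add (hZint.const_mul t) (hm.const_mul _), integral_const_mul t, integral_const_mul (1 - p)⁻¹ (fun ω => max (X ω - t) 0), hZi,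
      mul_add, ← mul_assoc, inv_mul_cancel₀ hpp.ne']
    ring

lemma aux_main (μ : Measure Ω) [IsProbabilityMeasure μ]
    (g : ℝ → EReal) (hg : IsRiskProfile g) (X : Ω → ℝ) (hX : Integrable X μ) (hm : Measurable X) :
    adjES μ g X
      = ⨆ Q ∈ {Q : Measure Ω | IsProbabilityMeasure Q ∧ Q ≪ μ ∧
            essSup (Q.rnDeriv μ) μ < ⊤},
          (((∫ ω, X ω ∂Q : ℝ) : EReal) - g (1 - ((essSup (Q.rnDeriv μ) μ).toReal)⁻¹)) := by
  apply le_antisymm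
  · apply iSup₂_le
    rintro p ⟨h0, h1⟩
    rcases h1.eq_or_lt with h | h
    · subst h
      rcases eq_or_ne (g 1) ⊤ with ht | ht
      · rw [ht, EReal.sub_top]
        exact bot_le
      have hb : g 1 ≠ ⊥ := hg.2.1 1 ⟨h0, h1⟩
      rw [EReal.sub_le_iff_le_add (Or.inl hb) (Or.inl ht)]
      unfold ES
      rw [if_pos rfl]
      apply le_of_forall_lt_imp_le_of_dense
      intro s hs
      induction s with
      | bot => exact bot_le
      | top => simp at hs
      | coe t =>
      rw [← EReal.sub_le_iff_le_add (Or.inl hb) (Or.inl ht)]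
      set A := {ω | t < X ω} with hA
      have mA : MeasurableSet A := measurableSet_lt measurable_const hm
      have hpos : 0 < μ.real A := by
        rw [measureReal_def, ENNReal.toReal_pos_iff]
        refine ⟨?_, measure_lt_top _ _⟩
        rw [pos_iff_ne_zero]
        intro hz
        apply hs.not_ge
        refine essSup_le_of_ae_le _ ?_
        have : ∀ᵐ ω ∂μ, ω ∉ A := measure_eq_zero_iff_ae_notMem.1 hz
        filter_upwards [this] with ω hω
        simp only [hA, mem_ofPred_eq, not_lt] at hω
        exact_mod_cast hω
      have hle : μ.real A ≤ 1 := measureReal_le_one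
      have hAi : Integrable (A.indicator (fun _ => (μ.real A)⁻¹)) μ := (integrable_const _).indicator mA
      have hAI : ∫ ω, A.indicator (fun _ => (μ.real A)⁻¹) ω ∂μ = 1 := by
        rw [integral_indicator_const _ mA, smul_eq_mul, mul_inv_cancel₀ hpos.ne']
      refine le_trans ?_ (aux_lower μ X hX g hg.1 (1 - μ.real A) (by linarith) (by linarith)
        (A.indicator (fun _ => (μ.real A)⁻¹)) (measurable_const.indicator mA) ?_ ?_ hAI)
      · apply EReal.sub_le_sub
        · rw [EReal.coe_le_coe_iff]
          have e : t = ∫ ω, A.indicator (fun _ => (μ.real A)⁻¹) ω * t ∂μ := by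
            rw [integral_mul_const, hAI, one_mul]
          rw [e]
          apply integral_mono (hAi.mul_const t)
          · have : (fun ω => A.indicator (fun _ => (μ.real A)⁻¹) ω * X ω)
              = A.indicator (fun ω => (μ.real A)⁻¹ * X ω) := by
              ext ω
              by_cases hω : ω ∈ A <;> simp [hω]
            rw [this]
            exact (hX.const_mul _).indicator mA
          · intro ω
            by_cases hω : ω ∈ A
            · simp only [hω, indicator_of_mem]
              exact mul_le_mul_of_nonneg_left (le_of_lt hω) (by positivity)
            · simp [hω]
        · exact hg.1 ⟨by linarith, by linarith⟩ ⟨h0, h1⟩ (by linarith)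
      · intro ω
        exact indicator_nonneg (fun _ _ => by positivity) ω
      · intro ω
        rw [sub_sub_cancel]
        exact indicator_le_self' (fun _ _ => by positivity) ω
    · obtain ⟨Z, hZ, hZ0, hZ1, hZi, he⟩ := aux_exZ μ X hm hX p h0 h
      unfold ES
      rw [if_neg h.ne, he]
      exact aux_lower μ X hX g hg.1 p h0 h Z hZ hZ0 hZ1 hZi
  · apply iSup₂_le
    rintro Q ⟨hQ, hac, hfin⟩
    obtain ⟨hc, hu⟩ := aux_upper μ X hm hX Q hac hfin
    set c := (essSup (Q.rnDeriv μ) μ).toReal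
    have a1 : c⁻¹ ≤ 1 := inv_le_one_of_one_le₀ hc
    have a2 : 0 < c⁻¹ := by positivity
    refine le_trans (EReal.sub_le_sub hu le_rfl) ?_
    exact le_iSup₂ (f := fun (p : ℝ) (_ : p ∈ Icc (0:ℝ) 1) => ES μ X p - g p) (1 - c⁻¹)
      ⟨by linarith, by linarith⟩

lemma aux_congr (μ : Measure Ω) (g : ℝ → EReal) (X Y : Ω → ℝ) (h : X =ᵐ[μ] Y) :
    adjES μ g X = adjES μ g Y := by
  have hV : VaRr μ X = VaRr μ Y := by
    ext p
    unfold VaRr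
    have : ∀ x, μ {ω | X ω ≤ x} = μ {ω | Y ω ≤ x} := by
      intro x
      apply measure_congr
      filter_upwards [h] with ω hω
      change (X ω ≤ x) = (Y ω ≤ x)
      rw [hω]
    simp only [this]
  have hE : essSup (fun ω => (X ω : EReal)) μ = essSup (fun ω => (Y ω : EReal)) μ := by
    apply essSup_congr_ae
    filter_upwards [h] with ω hω
    rw [hω]
  unfold adjES ES
  rw [hV, hE]

/-- Dual representation: for `g ∈ 𝒢` and `X ∈ L¹`,
`ES^g(X) = sup_{Q ∈ 𝒫^∞_P} (E_Q[X] - g(1 - ‖dQ/dP‖_∞⁻¹))`, where `𝒫^∞_P` is the set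
of probability measures absolutely continuous w.r.t. `μ` with essentially bounded
density. -/
theorem stmt9 (μ : Measure Ω) [IsProbabilityMeasure μ] (hatomless : Atomless μ)
    (g : ℝ → EReal) (hg : IsRiskProfile g) (X : Ω → ℝ) (hX : Integrable X μ) :
    adjES μ g X
      = ⨆ Q ∈ {Q : Measure Ω | IsProbabilityMeasure Q ∧ Q ≪ μ ∧
            essSup (Q.rnDeriv μ) μ < ⊤},
          (((∫ ω, X ω ∂Q : ℝ) : EReal) - g (1 - ((essSup (Q.rnDeriv μ) μ).toReal)⁻¹)) := by
  have hae := hX.1.ae_eq_mk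
  rw [aux_congr μ g X _ hae, aux_main μ g hg _ (hX.congr hae) hX.1.stronglyMeasurable_mk.measurable]
  refine iSup_congr fun Q => iSup_congr fun hQ => ?_
  obtain ⟨_, hac, _⟩ := hQ
  rw [integral_congr_ae (hac.ae_eq hae)]
end
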